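/- The isotomcomplement Q is the unique fixed point of T in the plane: T(Q) = Q, and for every point R, if T(R) = R then R = Q. (The existence of the ordinary point P' encodes the hypothesis that P does not lie on the Steiner circumellipse of ABC.) -/

import Mathlib

open EuclideanGeometry Affine

local notation "Pt" => EuclideanSpace ℝ (Fin 2)

/-!
Let `P' = (x : y : z)` in barycentric coordinates. Since `D3` is the trace of `AP'` on `BC`, we have
`(y + z) D3 = y B + z C`, and reflecting in the midpoint of `BC` gives `(y + z) D = z B + y C`.
As `2 Q = (y + z) A + (z + x) B + (x + y) C`, adding the three cyclic versions of this identity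
yields `T Q = Q`.

For uniqueness, write a fixed point as `((y + z) u, (z + x) v, (x + y) w)`. The fixed point equation
says that `(u, v, w)` is in the kernel of the Laplacian of a triangle with edge weights `x, y, z`,
which consists of the constants exactly when `x y + y z + z x ≠ 0`. This holds because
`P = (1/x : 1/y : 1/z)` is an ordinary point.
-/

open Function

section Scalars

variable {k : Type*} [Field k] {p q r u v w x y z : k}

theorem eq_and_eq_of_triangle_laplacian_eq_zero (hxyz : x * y + y * z + z * x ≠ 0)
    (hA : z * (u - v) + y * (u - w) = 0) (hB : z * (v - u) + x * (v - w) = 0) :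
    u = v ∧ u = w := by
  have huv : u = v := by
    apply sub_eq_zero.mp ((mul_eq_zero.mp _).resolve_left hxyz)
    linear_combination x * hA - y * hB
  have huw : u = w := by
    apply sub_eq_zero.mp ((mul_eq_zero.mp _).resolve_left hxyz)
    linear_combination (x + z) * hA + z * hB
  exact ⟨huv, huw⟩

theorem mul_add_mul_add_mul_ne_zero_of_mul_eq_mul (hp : p ≠ 0) (hq : q ≠ 0) (hr : r ≠ 0)
    (hpqr : p + q + r ≠ 0) (hxyz : x + y + z ≠ 0) (hxy : p * x = q * y) (hyz : q * y = r * z) :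
    x * y + y * z + z * x ≠ 0 := by
  intro hzero
  have hsq : (p + q + r) * (p * x) ^ 2 = 0 := by
    linear_combination p * q * r * hzero + ((p + q + r) * (p * x) + p * (q * y)) * hxy +
      (p * (q * y) + q * (p * x)) * hyz
  have hpx : p * x = 0 := by simpa [hpqr] using hsq
  have hx : x = 0 := by simpa [hp] using hpx
  have hy : y = 0 := by simpa [hq] using hxy.symm.trans hpx
  have hz : z = 0 := by simpa [hr] using (hxy.trans hyz).symm.trans hpx
  exact hxyz (by rw [hx, hy, hz, add_zero, add_zero])

end Scalars

section Barycentric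

variable {k V W : Type*} [Field k] [AddCommGroup V] [Module k V] [AddCommGroup W] [Module k W]
  {A B C D P R X : V} {p q r u v w x y z : k}

theorem collinear_iff_exists_eq_lineMap (hBC : B ≠ C) :
    Collinear k {B, C, D} ↔ ∃ t : k, D = AffineMap.lineMap B C t := by
  constructor
  · intro h
    have hD : D ∈ line[k, B, C] :=
      h.mem_affineSpan_of_mem_of_ne (by simp) (by simp) (by simp) hBC
    obtain ⟨t, ht⟩ := mem_affineSpan_pair_iff_exists_lineMap_eq.mp hD
    exact ⟨t, ht.symm⟩
  · rintro ⟨t, rfl⟩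
    exact collinear_triple_of_mem_affineSpan_pair (left_mem_affineSpan_pair k B C)
      (right_mem_affineSpan_pair k B C) (AffineMap.lineMap_mem_affineSpan_pair t B C)

/-- `x, y, z` are normalized barycentric coordinates of `X` with respect to `A, B, C`. The points
`A, B, C` need not be affinely independent, so that affine maps preserve the relation. -/
structure IsBarycentric (A B C : V) (x y z : k) (X : V) : Prop where
  sum_eq_one : x + y + z = 1
  eq_smul_add : X = x • A + y • B + z • C

namespace IsBarycentric

theorem rotate (hX : IsBarycentric A B C x y z X) : IsBarycentric B C A y z x X where
  sum_eq_one := by rw [← hX.sum_eq_one]; ring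
  eq_smul_add := by rw [hX.eq_smul_add]; abel

theorem map (hX : IsBarycentric A B C x y z X) (T : V →ᵃ[k] W) :
    IsBarycentric (T A) (T B) (T C) x y z (T X) where
  sum_eq_one := hX.sum_eq_one
  eq_smul_add := by
    have hT (Y : V) : T Y = T.linear Y + T 0 := congrFun T.decomp Y
    have hlinear : T.linear X = x • T.linear A + y • T.linear B + z • T.linear C := by
      rw [hX.eq_smul_add, map_add, map_add, map_smul, map_smul, map_smul]
    have hconst : T 0 = (x + y + z) • T 0 := by rw [hX.sum_eq_one, one_smul]
    rw [hT A, hT B, hT C, hT X]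
    linear_combination (norm := module) hlinear + hconst

theorem exists_of_mem_affineSpan (hX : X ∈ affineSpan k (Set.range ![A, B, C])) :
    ∃ x y z : k, IsBarycentric A B C x y z X := by
  obtain ⟨c, hc, rfl⟩ := eq_affineCombination_of_mem_affineSpan_of_fintype hX
  refine ⟨c 0, c 1, c 2, by rwa [← Fin.sum_univ_three], ?_⟩
  rw [Finset.affineCombination_eq_linear_combination _ _ _ hc, Fin.sum_univ_three]
  rfl

theorem coords_unique (hX : IsBarycentric A B C x y z X) (hX' : IsBarycentric A B C u v w X)
    (hABC : AffineIndependent k ![A, B, C]) : x = u ∧ y = v ∧ z = w := by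
  have hsum : (x - u) + (y - v) + (z - w) = 0 := by
    linear_combination hX.sum_eq_one - hX'.sum_eq_one
  have hcomb : (x - u) • A + (y - v) • B + (z - w) • C = 0 := by
    linear_combination (norm := module) hX'.eq_smul_add - hX.eq_smul_add
  have hzero := affineIndependent_iff.mp hABC Finset.univ ![x - u, y - v, z - w]
    (by simpa [Fin.sum_univ_three] using hsum) (by simpa [Fin.sum_univ_three] using hcomb)
  simpa [Fin.forall_fin_succ, sub_eq_zero] using hzero

theorem ne_zero_of_not_collinear (hX : IsBarycentric A B C x y z X)
    (hBCX : ¬ Collinear k {B, C, X}) : x ≠ 0 := by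
  rintro rfl
  have hX_line : X = AffineMap.lineMap B C z := by
    rw [hX.eq_smul_add, AffineMap.lineMap_apply_module, ← hX.sum_eq_one]
    module
  exact hBCX <| collinear_triple_of_mem_affineSpan_pair (left_mem_affineSpan_pair k B C)
    (right_mem_affineSpan_pair k B C) (hX_line ▸ AffineMap.lineMap_mem_affineSpan_pair z B C)

end IsBarycentric

theorem affineIndependent_rotate (h : AffineIndependent k ![A, B, C]) :
    AffineIndependent k ![B, C, A] :=
  h.comm_left.comm_right

theorem ne_of_affineIndependent (h : AffineIndependent k ![A, B, C]) : B ≠ C :=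
  h.injective.ne (a₁ := 1) (a₂ := 2) (by decide)

/-- `D` is the trace on the line `BC` of the cevian through `A` and `P`. -/
structure IsCevianTrace (k : Type*) {V : Type*} [Field k] [AddCommGroup V] [Module k V]
    (A B C P D : V) : Prop where
  collinear_side : Collinear k {B, C, D}
  collinear_cevian : Collinear k {A, P, D}

theorem pointReflection_midpoint_eq [Invertible (2 : k)] (B C D : V) :
    Equiv.pointReflection (midpoint k B C) D = B + C - D := by
  rw [Equiv.pointReflection_apply, vsub_eq_sub, vadd_eq_add, sub_add_eq_add_sub,
    midpoint_add_self]

theorem collinear_pointReflection_midpoint [Invertible (2 : k)] (hD : Collinear k {B, C, D}) :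
    Collinear k {B, C, Equiv.pointReflection (midpoint k B C) D} := by
  rcases eq_or_ne B C with rfl | hBC
  · simp [collinear_pair]
  rw [collinear_iff_exists_eq_lineMap hBC] at hD ⊢
  obtain ⟨t, rfl⟩ := hD
  refine ⟨1 - t, ?_⟩
  rw [pointReflection_midpoint_eq, AffineMap.lineMap_apply_module, AffineMap.lineMap_apply_module]
  module

namespace IsCevianTrace

theorem pointReflection [Invertible (2 : k)] (hD : IsCevianTrace k A B C P D)
    (hX : Collinear k {A, Equiv.pointReflection (midpoint k B C) D, X}) :
    IsCevianTrace k A B C X (Equiv.pointReflection (midpoint k B C) D) where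
  collinear_side := collinear_pointReflection_midpoint hD.collinear_side
  collinear_cevian := by rwa [Set.pair_comm]

theorem exists_isBarycentric (hD : IsCevianTrace k A B C P D)
    (hABC : AffineIndependent k ![A, B, C]) :
    ∃ s t : k, D = AffineMap.lineMap B C s ∧
      IsBarycentric A B C (1 - t) (t * (1 - s)) (t * s) P := by
  have hBC : B ≠ C := ne_of_affineIndependent hABC
  have hAD : A ≠ D := by
    rintro rfl
    exact affineIndependent_iff_not_collinear_set.mp (affineIndependent_rotate hABC)
      hD.collinear_side
  obtain ⟨s, hs⟩ := (collinear_iff_exists_eq_lineMap hBC).mp hD.collinear_side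
  have hADP : Collinear k {A, D, P} := by rw [Set.pair_comm]; exact hD.collinear_cevian
  obtain ⟨t, rfl⟩ := (collinear_iff_exists_eq_lineMap hAD).mp hADP
  refine ⟨s, t, hs, by ring, ?_⟩
  rw [hs, AffineMap.lineMap_apply_module, AffineMap.lineMap_apply_module]
  module

theorem smul_eq (hD : IsCevianTrace k A B C P D) (hABC : AffineIndependent k ![A, B, C])
    (hP : IsBarycentric A B C x y z P) : (y + z) • D = y • B + z • C := by
  obtain ⟨s, t, rfl, hP'⟩ := hD.exists_isBarycentric hABC
  obtain ⟨-, rfl, rfl⟩ := hP.coords_unique hP' hABC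
  rw [AffineMap.lineMap_apply_module]
  module

theorem smul_eq_of_pointReflection [Invertible (2 : k)]
    (hD : IsCevianTrace k A B C P (Equiv.pointReflection (midpoint k B C) D))
    (hABC : AffineIndependent k ![A, B, C]) (hP : IsBarycentric A B C x y z P) :
    (y + z) • D = z • B + y • C := by
  have hrefl := hD.smul_eq hABC hP
  rw [pointReflection_midpoint_eq] at hrefl
  linear_combination (norm := module) -hrefl

theorem mul_eq_mul_of_pointReflection [Invertible (2 : k)] (hD : IsCevianTrace k A B C P D)
    (hD' : IsCevianTrace k A B C X (Equiv.pointReflection (midpoint k B C) D))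
    (hABC : AffineIndependent k ![A, B, C]) (hP : IsBarycentric A B C p q r P)
    (hX : IsBarycentric A B C x y z X) : q * y = r * z := by
  have hBC : B ≠ C := ne_of_affineIndependent hABC
  have hqr : (q + r) • D = q • B + r • C := hD.smul_eq hABC hP
  have hyz : (y + z) • D = z • B + y • C := hD'.smul_eq_of_pointReflection hABC hX
  have hsmul : (q * y - r * z) • (B - C) = 0 := by
    linear_combination (norm := module) (q + r) • hyz - (y + z) • hqr
  exact sub_eq_zero.mp ((smul_eq_zero.mp hsmul).resolve_right (sub_ne_zero.mpr hBC))

end IsCevianTrace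

theorem add_ne_zero_of_smul_eq (hBC : B ≠ C) (hD : (y + z) • D = z • B + y • C)
    (hxyz : x * y + y * z + z * x ≠ 0) : y + z ≠ 0 := by
  intro hzero
  have hy : y = -z := by linear_combination hzero
  have hsmul : z • (B - C) = 0 := by
    rw [hzero, hy] at hD
    linear_combination (norm := module) -hD
  have hz : z = 0 := (smul_eq_zero.mp hsmul).resolve_right (sub_ne_zero.mpr hBC)
  exact hxyz (by rw [hy, hz]; ring)

/-- The complement map of the triangle `ABC`: the homothety with ratio `-1/2` centred at the
centroid. It is meaningful only when `2` and `3` are nonzero in `k`. -/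
def complementMap (k : Type*) {V : Type*} [Field k] [AddCommGroup V] [Module k V]
    (A B C : V) : V →ᵃ[k] V :=
  AffineMap.homothety ((1 / 3 : k) • (A + B + C)) (-1 / 2 : k)

theorem IsBarycentric.isBarycentric_complementMap [NeZero (2 : k)] [NeZero (3 : k)]
    (hX : IsBarycentric A B C x y z X) :
    IsBarycentric A B C ((y + z) / 2) ((z + x) / 2) ((x + y) / 2) (complementMap k A B C X) where
  sum_eq_one := by
    field_simp
    linear_combination 2 * hX.sum_eq_one
  eq_smul_add := by
    have hx : x = 1 - y - z := by linear_combination hX.sum_eq_one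
    rw [complementMap, AffineMap.homothety_apply, vsub_eq_sub, vadd_eq_add, hX.eq_smul_add,
      hx]
    match_scalars <;> field_simp <;> ring

section FixedPoint

variable {T : V →ᵃ[k] V}

theorem isFixedPt_complementMap [NeZero (2 : k)] [NeZero (3 : k)]
    (hX : IsBarycentric A B C x y z X) (hTA : (y + z) • T A = z • B + y • C)
    (hTB : (z + x) • T B = x • C + z • A) (hTC : (x + y) • T C = y • A + x • B) :
    IsFixedPt T (complementMap k A B C X) := by
  have hQ := hX.isBarycentric_complementMap
  rw [IsFixedPt, (hQ.map T).eq_smul_add, hQ.eq_smul_add]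
  linear_combination (norm := module) (1 / 2 : k) • (hTA + hTB + hTC)

theorem IsBarycentric.of_isFixedPt
    (hR : IsBarycentric A B C ((y + z) * u) ((z + x) * v) ((x + y) * w) R)
    (hfix : IsFixedPt T R) (hTA : (y + z) • T A = z • B + y • C)
    (hTB : (z + x) • T B = x • C + z • A) (hTC : (x + y) • T C = y • A + x • B) :
    IsBarycentric A B C (z * v + y * w) (z * u + x * w) (y * u + x * v) R where
  sum_eq_one := by linear_combination hR.sum_eq_one
  eq_smul_add := by
    have hTR := (hR.map T).eq_smul_add
    rw [hfix.eq] at hTR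
    linear_combination (norm := module) hTR + u • hTA + v • hTB + w • hTC

theorem eq_complementMap_of_isFixedPt [NeZero (2 : k)] [NeZero (3 : k)]
    (hABC : AffineIndependent k ![A, B, C]) (hX : IsBarycentric A B C x y z X)
    (hxyz : x * y + y * z + z * x ≠ 0) (hTA : (y + z) • T A = z • B + y • C)
    (hTB : (z + x) • T B = x • C + z • A) (hTC : (x + y) • T C = y • A + x • B)
    (hR : R ∈ affineSpan k (Set.range ![A, B, C])) (hfix : IsFixedPt T R) :
    R = complementMap k A B C X := by
  have hBC : B ≠ C := ne_of_affineIndependent hABC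
  have hCA : C ≠ A := ne_of_affineIndependent (affineIndependent_rotate hABC)
  have hAB : A ≠ B :=
    ne_of_affineIndependent (affineIndependent_rotate (affineIndependent_rotate hABC))
  have hyz : y + z ≠ 0 := add_ne_zero_of_smul_eq hBC hTA hxyz
  have hzx : z + x ≠ 0 := add_ne_zero_of_smul_eq (x := y) hCA hTB (by convert hxyz using 1; ring)
  have hxy : x + y ≠ 0 := add_ne_zero_of_smul_eq (x := z) hAB hTC (by convert hxyz using 1; ring)
  obtain ⟨a, b, c, hR⟩ := IsBarycentric.exists_of_mem_affineSpan hR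
  obtain ⟨u, rfl⟩ : ∃ u, a = (y + z) * u := ⟨a / (y + z), (mul_div_cancel₀ a hyz).symm⟩
  obtain ⟨v, rfl⟩ : ∃ v, b = (z + x) * v := ⟨b / (z + x), by field_simp⟩
  obtain ⟨w, rfl⟩ : ∃ w, c = (x + y) * w := ⟨c / (x + y), by field_simp⟩
  obtain ⟨hA, hB, -⟩ := hR.coords_unique (hR.of_isFixedPt hfix hTA hTB hTC) hABC
  obtain ⟨rfl, rfl⟩ : u = v ∧ u = w := eq_and_eq_of_triangle_laplacian_eq_zero hxyz
    (by linear_combination hA) (by linear_combination hB)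
  have hu : u = 1 / 2 := by
    field_simp
    linear_combination hR.sum_eq_one - 2 * u * hX.sum_eq_one
  rw [hR.eq_smul_add, hX.isBarycentric_complementMap.eq_smul_add, hu]
  simp only [mul_one_div]

end FixedPoint

theorem stmt_17_general [Invertible (2 : k)] [NeZero (3 : k)] {A B C P D E F P' : V}
    {T : V →ᵃ[k] V} (hABC : AffineIndependent k ![A, B, C])
    (hPa : ¬ Collinear k {B, C, P}) (hPb : ¬ Collinear k {C, A, P})
    (hPc : ¬ Collinear k {A, B, P}) (hD : IsCevianTrace k A B C P D)
    (hE : IsCevianTrace k B C A P E) (hF : IsCevianTrace k C A B P F)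
    (hP'a : Collinear k {A, Equiv.pointReflection (midpoint k B C) D, P'})
    (hP'b : Collinear k {B, Equiv.pointReflection (midpoint k C A) E, P'})
    (hP'c : Collinear k {C, Equiv.pointReflection (midpoint k A B) F, P'})
    (hTA : T A = D) (hTB : T B = E) (hTC : T C = F) :
    IsFixedPt T (complementMap k A B C P') ∧
      ∀ R ∈ affineSpan k (Set.range ![A, B, C]), IsFixedPt T R → R = complementMap k A B C P' := by
  subst hTA hTB hTC
  have hBCA := affineIndependent_rotate hABC
  have hCAB := affineIndependent_rotate hBCA
  have hD' := hD.pointReflection hP'a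
  have hE' := hE.pointReflection hP'b
  have hF' := hF.pointReflection hP'c
  obtain ⟨_, _, -, hP⟩ := hD.exists_isBarycentric hABC
  obtain ⟨_, _, -, hX⟩ := hD'.exists_isBarycentric hABC
  have hTA := hD'.smul_eq_of_pointReflection hABC hX
  have hTB := hE'.smul_eq_of_pointReflection hBCA hX.rotate
  have hTC := hF'.smul_eq_of_pointReflection hCAB hX.rotate.rotate
  refine ⟨isFixedPt_complementMap hX hTA hTB hTC, fun R ↦
    eq_complementMap_of_isFixedPt hABC hX ?_ hTA hTB hTC⟩
  exact mul_add_mul_add_mul_ne_zero_of_mul_eq_mul (hP.ne_zero_of_not_collinear hPa)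
    (hP.rotate.ne_zero_of_not_collinear hPb) (hP.rotate.rotate.ne_zero_of_not_collinear hPc)
    (by rw [hP.sum_eq_one]; exact one_ne_zero) (by rw [hX.sum_eq_one]; exact one_ne_zero)
    (hF.mul_eq_mul_of_pointReflection hF' hCAB hP.rotate.rotate hX.rotate.rotate)
    (hD.mul_eq_mul_of_pointReflection hD' hABC hP hX)

end Barycentric

theorem stmt_17 (A B C G P D E F D0 E0 F0 D3 E3 F3 P' Q : Pt) (T : Pt →ᵃ[ℝ] Pt)
(hABC : AffineIndependent ℝ ![A, B, C])
    (hG : G = (1/3 : ℝ) • (A + B + C))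
    (hPa : ¬ Collinear ℝ {B, C, P})
    (hPb : ¬ Collinear ℝ {C, A, P})
    (hPc : ¬ Collinear ℝ {A, B, P})
    (hD : Collinear ℝ {B, C, D}) (hDcev : Collinear ℝ {A, P, D})
    (hE : Collinear ℝ {C, A, E}) (hEcev : Collinear ℝ {B, P, E})
    (hF : Collinear ℝ {A, B, F}) (hFcev : Collinear ℝ {C, P, F})
    (hD0 : D0 = midpoint ℝ B C) (hE0 : E0 = midpoint ℝ C A) (hF0 : F0 = midpoint ℝ A B)
(hD3 : D3 = Equiv.pointReflection D0 D)
    (hE3 : E3 = Equiv.pointReflection E0 E)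
    (hF3 : F3 = Equiv.pointReflection F0 F)
(hP'a : Collinear ℝ {A, D3, P'})
    (hP'b : Collinear ℝ {B, E3, P'})
    (hP'c : Collinear ℝ {C, F3, P'})
    (hQ : Q = AffineMap.homothety G (-1/2 : ℝ) P')
    (hTA : T A = D) (hTB : T B = E) (hTC : T C = F) :
    T Q = Q ∧ ∀ R : Pt, T R = R → R = Q := by
  subst hG hD0 hE0 hF0 hD3 hE3 hF3 hQ
  have hspan : affineSpan ℝ (Set.range ![A, B, C]) = ⊤ :=
    hABC.affineSpan_eq_top_iff_card_eq_finrank_add_one.mpr (by simp)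
  have hfix := stmt_17_general hABC hPa hPb hPc ⟨hD, hDcev⟩ ⟨hE, hEcev⟩ ⟨hF, hFcev⟩
    hP'a hP'b hP'c hTA hTB hTC
  exact ⟨hfix.1, fun R ↦ hfix.2 R (hspan ▸ AffineSubspace.mem_top ℝ _ R)⟩
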